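/- Trace of the second variation over Killing fields (Corollary 4.3, flat torus case): let (u, A) be a periodic configuration solving the YMH equations. Then the sum of the second derivative at t = 0 of t ↦ E_ε(u + t·σ₊, A + t·(0, F − h)) and the second derivative at t = 0 of t ↦ E_ε(u + t·(−i·σ₊), A + t·(h − F, 0)) equals −4·∫_{[0,1]²} (F + h)·|σ₊|². -/

import Mathlib

open MeasureTheory Complex

noncomputable section

/-- Partial derivative in the first coordinate direction. -/
def pd1 {E : Type*} [NormedAddCommGroup E] [NormedSpace ℝ E] (f : ℝ × ℝ → E) (x : ℝ × ℝ) : E :=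
  fderiv ℝ f x (1, 0)

/-- Partial derivative in the second coordinate direction. -/
def pd2 {E : Type*} [NormedAddCommGroup E] [NormedSpace ℝ E] (f : ℝ × ℝ → E) (x : ℝ × ℝ) : E :=
  fderiv ℝ f x (0, 1)

/-- First covariant derivative `D₁f = ∂₁f − iA₁f`. -/
def D1 (A1 : ℝ × ℝ → ℝ) (f : ℝ × ℝ → ℂ) (x : ℝ × ℝ) : ℂ :=
  pd1 f x - Complex.I * (A1 x) * f x

/-- Second covariant derivative `D₂f = ∂₂f − iA₂f`. -/
def D2 (A2 : ℝ × ℝ → ℝ) (f : ℝ × ℝ → ℂ) (x : ℝ × ℝ) : ℂ :=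
  pd2 f x - Complex.I * (A2 x) * f x

/-- Curvature function `F = ∂₁A₂ − ∂₂A₁`. -/
def curv (A1 A2 : ℝ × ℝ → ℝ) (x : ℝ × ℝ) : ℝ := pd1 A2 x - pd2 A1 x

/-- `h = (1 − |u|²)/(2ε²)`. -/
def hfun (ε : ℝ) (u : ℝ × ℝ → ℂ) (x : ℝ × ℝ) : ℝ := (1 - ‖u x‖ ^ 2) / (2 * ε ^ 2)

/-- `σ₊ = D₁u + iD₂u`. -/
def sigP (u : ℝ × ℝ → ℂ) (A1 A2 : ℝ × ℝ → ℝ) (x : ℝ × ℝ) : ℂ :=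
  D1 A1 u x + Complex.I * D2 A2 u x

/-- `σ₋ = D₁u − iD₂u`. -/
def sigM (u : ℝ × ℝ → ℂ) (A1 A2 : ℝ × ℝ → ℝ) (x : ℝ × ℝ) : ℂ :=
  D1 A1 u x - Complex.I * D2 A2 u x

/-- The Yang--Mills--Higgs energy over the fundamental domain `[0,1]²`. -/
def energy (ε : ℝ) (u : ℝ × ℝ → ℂ) (A1 A2 : ℝ × ℝ → ℝ) : ℝ :=
  ∫ x in Set.Icc (0:ℝ) 1 ×ˢ Set.Icc (0:ℝ) 1,
    (ε ^ 2 * curv A1 A2 x ^ 2 + ‖D1 A1 u x‖ ^ 2 + ‖D2 A2 u x‖ ^ 2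
      + (1 - ‖u x‖ ^ 2) ^ 2 / (4 * ε ^ 2))

/-- `ℤ²`-periodicity. -/
def Periodic2 {E : Type*} (f : ℝ × ℝ → E) : Prop :=
  ∀ x : ℝ × ℝ, f (x.1 + 1, x.2) = f x ∧ f (x.1, x.2 + 1) = f x

/-- The Yang--Mills--Higgs equations on all of `ℝ²`. -/
def IsYMH (ε : ℝ) (u : ℝ × ℝ → ℂ) (A1 A2 : ℝ × ℝ → ℝ) : Prop :=
  (∀ x, -(D1 A1 (D1 A1 u) x + D2 A2 (D2 A2 u) x) = (hfun ε u x : ℂ) * u x) ∧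
  (∀ x, ε ^ 2 * pd2 (curv A1 A2) x = ((starRingEnd ℂ) (u x) * D1 A1 u x).im) ∧
  (∀ x, ε ^ 2 * pd1 (curv A1 A2) x = -((starRingEnd ℂ) (u x) * D2 A2 u x).im)

/-- The Yang--Mills--Higgs equations on an open set `U ⊆ ℝ²`. -/
def IsYMHOn (ε : ℝ) (u : ℝ × ℝ → ℂ) (A1 A2 : ℝ × ℝ → ℝ) (U : Set (ℝ × ℝ)) : Prop :=
  (∀ x ∈ U, -(D1 A1 (D1 A1 u) x + D2 A2 (D2 A2 u) x) = (hfun ε u x : ℂ) * u x) ∧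
  (∀ x ∈ U, ε ^ 2 * pd2 (curv A1 A2) x = ((starRingEnd ℂ) (u x) * D1 A1 u x).im) ∧
  (∀ x ∈ U, ε ^ 2 * pd1 (curv A1 A2) x = -((starRingEnd ℂ) (u x) * D2 A2 u x).im)

/-- Stability: nonnegative second variation of the energy along all smooth periodic
variations of the section and the connection. -/
def Stable (ε : ℝ) (u : ℝ × ℝ → ℂ) (A1 A2 : ℝ × ℝ → ℝ) : Prop :=
  ∀ v : ℝ × ℝ → ℂ, ∀ a1 a2 : ℝ × ℝ → ℝ,
    ContDiff ℝ (⊤ : ℕ∞) v → Periodic2 v → ContDiff ℝ (⊤ : ℕ∞) a1 → Periodic2 a1 →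
    ContDiff ℝ (⊤ : ℕ∞) a2 → Periodic2 a2 →
    0 ≤ iteratedDeriv 2 (fun t : ℝ =>
      energy ε (fun x => u x + t • v x)
        (fun x => A1 x + t * a1 x) (fun x => A2 x + t * a2 x)) 0

/-!
Along a path `(u + t v, A + t a)` the energy density is the squared norm of a field that is
quadratic in `t`, so each second variation is the integral of an explicit density.

Put `σ = σ₊` and `φ = F - h`. The Weitzenböck identity `(D₁ - iD₂)(D₁ + iD₂) = D₁² + D₂² + F` and
the first equation give `D₁σ - iD₂σ = φu`; the other two equations say `∂₁φ + i∂₂φ = ūσ/ε²`.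
Applying `D₁ + iD₂` to the former yields `(D₁² + D₂²)σ = (2F - h + |u|²/ε²)σ`.

The relation `D₁σ - iD₂σ = φu` also turns the squared covariant-derivative terms of the two
densities into `4|D₁σ|²` and `4|D₂σ|²`. The densities sum to `-4 (F + h)|σ|²` plus
`4 (|D₁σ|² + |D₂σ|² + ⟨σ, (D₁² + D₂²)σ⟩)`, and the latter is four times the divergence of the
periodic field `(⟨σ, D₁σ⟩, ⟨σ, D₂σ⟩)`, which integrates to zero.
-/

section

open scoped InnerProductSpace ComplexConjugate Polynomial

section ComplexInner

lemma inner_I_mul_right (z w : ℂ) : ⟪z, I * w⟫_ℝ = -⟪I * z, w⟫_ℝ := by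
  simp only [Complex.inner, map_mul, conj_I, mul_re, mul_im, neg_re, neg_im, I_re, I_im, conj_re,
    conj_im]
  ring

lemma inner_sq_add_inner_I_mul_sq (z w : ℂ) :
    ⟪z, w⟫_ℝ ^ 2 + ⟪z, I * w⟫_ℝ ^ 2 = ‖z‖ ^ 2 * ‖w‖ ^ 2 := by
  simp only [← normSq_eq_norm_sq, normSq_apply, Complex.inner, mul_re, mul_im, I_re, I_im, conj_re,
    conj_im]
  ring

end ComplexInner

section CovDeriv

variable {E : Type*} [NormedAddCommGroup E] [NormedSpace ℝ E]
  {a b : E → ℝ} {f g : E → ℂ} {x : E}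

/-- The covariant derivative in the direction `e` on the trivial Hermitian line bundle over `E`,
where `a` is the `e`-component of the connection form. Both `D1` and `D2` are instances. -/
def covDeriv (e : E) (a : E → ℝ) (f : E → ℂ) (x : E) : ℂ :=
  fderiv ℝ f x e - I * a x * f x

lemma contDiff_fderiv_apply {F : Type*} [NormedAddCommGroup F] [NormedSpace ℝ F] {f : E → F}
    {n : WithTop ℕ∞} (hf : ContDiff ℝ (n + 1) f) (e : E) :
    ContDiff ℝ n fun x => fderiv ℝ f x e :=
  (hf.fderiv_right le_rfl).clm_apply contDiff_const

lemma contDiff_covDeriv {n : WithTop ℕ∞} (hf : ContDiff ℝ (n + 1) f) (ha : ContDiff ℝ n a)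
    (e : E) : ContDiff ℝ n (covDeriv e a f) :=
  (contDiff_fderiv_apply hf e).sub
    ((contDiff_const.mul (ofRealCLM.contDiff.comp ha)).mul (hf.of_le le_self_add))

lemma covDeriv_add (hf : DifferentiableAt ℝ f x) (hg : DifferentiableAt ℝ g x) (e : E) :
    covDeriv e a (fun y => f y + g y) x = covDeriv e a f x + covDeriv e a g x := by
  simp only [covDeriv, fderiv_fun_add hf hg, add_apply]
  ring

lemma covDeriv_const_mul (hf : DifferentiableAt ℝ f x) (c : ℂ) (e : E) :
    covDeriv e a (fun y => c * f y) x = c * covDeriv e a f x := by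
  simp only [covDeriv, fderiv_const_mul hf, smul_apply, smul_eq_mul]
  ring

lemma fderiv_ofReal_apply (ha : DifferentiableAt ℝ a x) (e : E) :
    fderiv ℝ (fun y => (a y : ℂ)) x e = (fderiv ℝ a x e : ℂ) :=
  congrArg (· e) (ofRealCLM.hasFDerivAt.comp x ha.hasFDerivAt).fderiv

lemma differentiableAt_ofReal (ha : DifferentiableAt ℝ a x) :
    DifferentiableAt ℝ (fun y => (a y : ℂ)) x :=
  ofRealCLM.differentiableAt.comp x ha

lemma covDeriv_ofReal_mul (hb : DifferentiableAt ℝ b x) (hf : DifferentiableAt ℝ f x) (e : E) :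
    covDeriv e a (fun y => (b y : ℂ) * f y) x
      = (fderiv ℝ b x e : ℂ) * f x + b x * covDeriv e a f x := by
  simp only [covDeriv, fderiv_fun_mul (differentiableAt_ofReal hb) hf,
    add_apply, smul_apply, smul_eq_mul, fderiv_ofReal_apply hb]
  ring

/-- Metric compatibility: the connection term is skew-Hermitian, so it drops out. -/
lemma fderiv_inner_eq_covDeriv (hf : DifferentiableAt ℝ f x) (hg : DifferentiableAt ℝ g x)
    (a : E → ℝ) (e : E) :
    fderiv ℝ (fun y => ⟪f y, g y⟫_ℝ) x e
      = ⟪f x, covDeriv e a g x⟫_ℝ + ⟪covDeriv e a f x, g x⟫_ℝ := by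
  rw [fderiv_inner_apply ℝ hf hg]
  simp only [covDeriv, Complex.inner, sub_re, mul_re, mul_im, sub_im, conj_re, conj_im, I_re, I_im,
    ofReal_re, ofReal_im]
  ring

lemma covDeriv_covDeriv (hf : ContDiffAt ℝ 2 f x) (hb : DifferentiableAt ℝ b x) (d e : E) :
    covDeriv d a (covDeriv e b f) x
      = fderiv ℝ (fderiv ℝ f) x d e - I * (fderiv ℝ b x d * f x + b x * fderiv ℝ f x d)
        - I * a x * covDeriv e b f x := by
  have hdf : DifferentiableAt ℝ (fderiv ℝ f) x :=
    (hf.fderiv_right (m := 1) (by norm_num)).differentiableAt one_ne_zero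
  have hf' : DifferentiableAt ℝ f x := hf.differentiableAt two_ne_zero
  have hb' : DifferentiableAt ℝ (fun y => I * (b y : ℂ)) x :=
    (differentiableAt_ofReal hb).const_mul I
  have hderiv : fderiv ℝ (covDeriv e b f) x d
      = fderiv ℝ (fderiv ℝ f) x d e - I * (fderiv ℝ b x d * f x + b x * fderiv ℝ f x d) := by
    unfold covDeriv
    rw [fderiv_fun_sub (hdf.clm_apply (differentiableAt_const e)) (hb'.fun_mul hf'),
      fderiv_clm_apply hdf (differentiableAt_const e), fderiv_fun_mul hb' hf',
      fderiv_const_mul (differentiableAt_ofReal hb)]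
    simp only [fderiv_fun_const, Pi.zero_apply, ContinuousLinearMap.comp_zero, zero_add, sub_apply,
      ContinuousLinearMap.flip_apply, add_apply, smul_apply, smul_eq_mul, fderiv_ofReal_apply hb]
    ring
  rw [covDeriv, hderiv]

lemma covDeriv_comm (hf : ContDiffAt ℝ 2 f x) (ha : DifferentiableAt ℝ a x)
    (hb : DifferentiableAt ℝ b x) (d e : E) :
    covDeriv d a (covDeriv e b f) x - covDeriv e b (covDeriv d a f) x
      = -I * ((fderiv ℝ b x d - fderiv ℝ a x e : ℝ) : ℂ) * f x := by
  have hsymm : fderiv ℝ (fderiv ℝ f) x d e = fderiv ℝ (fderiv ℝ f) x e d :=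
    hf.isSymmSndFDerivAt (by simp) d e
  rw [covDeriv_covDeriv hf hb, covDeriv_covDeriv hf ha, hsymm]
  simp only [covDeriv]
  push_cast
  ring

lemma covDeriv_add_smul (hf : DifferentiableAt ℝ f x) (hg : DifferentiableAt ℝ g x) (t : ℝ)
    (e : E) :
    covDeriv e (fun y => a y + t * b y) (fun y => f y + t • g y) x
      = covDeriv e a f x + t • (covDeriv e a g x - I * b x * f x) + t ^ 2 • -(I * b x * g x) := by
  simp only [covDeriv, fderiv_fun_add hf (hg.fun_const_smul t), fderiv_fun_const_smul hg,
    add_apply, smul_apply]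
  simp only [real_smul]
  push_cast
  ring

end CovDeriv

section QuadraticPath

lemma iteratedDeriv_polynomial_eval (p : ℝ[X]) (n : ℕ) :
    iteratedDeriv n (fun t => p.eval t) = fun t => (Polynomial.derivative^[n] p).eval t := by
  induction n with
  | zero => simp
  | succ n ih =>
    rw [iteratedDeriv_succ, ih, Function.iterate_succ_apply']
    exact funext fun t => Polynomial.deriv _

lemma iteratedDeriv_polynomial_eval_zero (p : ℝ[X]) (n : ℕ) :
    iteratedDeriv n (fun t => p.eval t) 0 = n.factorial * p.coeff n := by
  rw [iteratedDeriv_polynomial_eval]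
  beta_reduce
  rw [← Polynomial.coeff_zero_eq_eval_zero, Polynomial.coeff_iterate_derivative, zero_add,
    Nat.descFactorial_self, nsmul_eq_mul]

lemma norm_add_smul_add_sq_smul_sq {H : Type*} [NormedAddCommGroup H] [InnerProductSpace ℝ H]
    (p q r : H) (t : ℝ) :
    ‖p + t • q + t ^ 2 • r‖ ^ 2
      = ‖p‖ ^ 2 + 2 * ⟪p, q⟫_ℝ * t + (‖q‖ ^ 2 + 2 * ⟪p, r⟫_ℝ) * t ^ 2
        + 2 * ⟪q, r⟫_ℝ * t ^ 3 + ‖r‖ ^ 2 * t ^ 4 := by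
  simp only [← real_inner_self_eq_norm_sq, inner_add_left, inner_add_right, real_inner_smul_left,
    real_inner_smul_right, real_inner_comm p q, real_inner_comm p r, real_inner_comm q r]
  ring

variable {X : Type*} [TopologicalSpace X] [T2Space X] [MeasurableSpace X] [OpensMeasurableSpace X]
  {μ : Measure X} [IsFiniteMeasureOnCompacts μ] {K : Set X}
  {H : Type*} [NormedAddCommGroup H] [InnerProductSpace ℝ H] {P Q R : X → H}

lemma iteratedDeriv_two_integral_norm_sq (hK : IsCompact K) (hP : ContinuousOn P K)
    (hQ : ContinuousOn Q K) (hR : ContinuousOn R K) :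
    iteratedDeriv 2 (fun t : ℝ => ∫ x in K, ‖P x + t • Q x + t ^ 2 • R x‖ ^ 2 ∂μ) 0
      = 2 * ∫ x in K, (‖Q x‖ ^ 2 + 2 * ⟪P x, R x⟫_ℝ) ∂μ := by
  have integrable {φ : X → ℝ} (hφ : ContinuousOn φ K) : IntegrableOn φ K μ :=
    hφ.integrableOn_compact hK
  let p : ℝ[X] := .C (∫ x in K, ‖P x‖ ^ 2 ∂μ) + .C (∫ x in K, 2 * ⟪P x, Q x⟫_ℝ ∂μ) * .X
    + .C (∫ x in K, (‖Q x‖ ^ 2 + 2 * ⟪P x, R x⟫_ℝ) ∂μ) * .X ^ 2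
    + .C (∫ x in K, 2 * ⟪Q x, R x⟫_ℝ ∂μ) * .X ^ 3 + .C (∫ x in K, ‖R x‖ ^ 2 ∂μ) * .X ^ 4
  have heval (t : ℝ) : ∫ x in K, ‖P x + t • Q x + t ^ 2 • R x‖ ^ 2 ∂μ = p.eval t := by
    simp only [norm_add_smul_add_sq_smul_sq]
    rw [integral_add (integrable (by fun_prop)) (integrable (by fun_prop)),
      integral_add (integrable (by fun_prop)) (integrable (by fun_prop)),
      integral_add (integrable (by fun_prop)) (integrable (by fun_prop)),
      integral_add (integrable (by fun_prop)) (integrable (by fun_prop))]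
    simp [p, integral_mul_const]
  have hcoeff : p.coeff 2 = ∫ x in K, (‖Q x‖ ^ 2 + 2 * ⟪P x, R x⟫_ℝ) ∂μ := by
    simp [p]
  simp only [heval, iteratedDeriv_polynomial_eval_zero, hcoeff, Nat.factorial_two, Nat.cast_ofNat]

end QuadraticPath

section Periodic

variable {E : Type*} [NormedAddCommGroup E]

lemma Periodic2.map₂ {F G H : Type*} {f : ℝ × ℝ → F} {g : ℝ × ℝ → G}
    (hf : Periodic2 f) (hg : Periodic2 g) (op : F → G → H) :
    Periodic2 fun x => op (f x) (g x) := fun x =>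
  ⟨congrArg₂ op (hf x).1 (hg x).1, congrArg₂ op (hf x).2 (hg x).2⟩

/-- The fundamental domain `[0,1]²` of the torus. -/
abbrev unitSquare : Set (ℝ × ℝ) := Set.Icc (0 : ℝ) 1 ×ˢ Set.Icc (0 : ℝ) 1

lemma isCompact_unitSquare : IsCompact unitSquare := isCompact_Icc.prod isCompact_Icc

lemma integrableOn_unitSquare {f : ℝ × ℝ → E} (hf : Continuous f) : IntegrableOn f unitSquare :=
  hf.continuousOn.integrableOn_compact isCompact_unitSquare

variable [NormedSpace ℝ E]

lemma Periodic2.fderiv_apply {f : ℝ × ℝ → E} (hf : Periodic2 f) (e : ℝ × ℝ) :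
    Periodic2 fun x => fderiv ℝ f x e := by
  have fderiv_add {p : ℝ × ℝ} (hp : ∀ x, f (x + p) = f x) (x : ℝ × ℝ) :
      fderiv ℝ f (x + p) = fderiv ℝ f x := by
    rw [← fderiv_comp_add_right, funext hp]
  have h1 (x : ℝ × ℝ) : f (x + (1, 0)) = f x := by simpa [Prod.add_def] using (hf x).1
  have h2 (x : ℝ × ℝ) : f (x + (0, 1)) = f x := by simpa [Prod.add_def] using (hf x).2
  refine fun x => ⟨?_, ?_⟩
  · simpa [Prod.add_def] using congrArg (· e) (fderiv_add h1 x)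
  · simpa [Prod.add_def] using congrArg (· e) (fderiv_add h2 x)

lemma Periodic2.covDeriv {a : ℝ × ℝ → ℝ} {f : ℝ × ℝ → ℂ} (hf : Periodic2 f) (ha : Periodic2 a)
    (e : ℝ × ℝ) : Periodic2 (covDeriv e a f) :=
  (hf.fderiv_apply e).map₂ (ha.map₂ hf fun s z => I * s * z) (· - ·)

lemma integral_divergence_eq_zero_of_periodic {V W : ℝ × ℝ → E} (hV : ContDiff ℝ 1 V)
    (hW : ContDiff ℝ 1 W) (hVp : Periodic2 V) (hWp : Periodic2 W) :
    ∫ x in unitSquare, (pd1 V x + pd2 W x) = 0 := by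
  have hcont : Continuous fun x => pd1 V x + pd2 W x :=
    ((contDiff_fderiv_apply (n := 0) hV (1, 0)).add
      (contDiff_fderiv_apply (n := 0) hW (0, 1))).continuous
  have hV_sides (s : ℝ) : V (1, s) = V (0, s) := by simpa using (hVp (0, s)).1
  have hW_sides (s : ℝ) : W (s, 1) = W (s, 0) := by simpa using (hWp (s, 0)).2
  have hdiv := integral_divergence_prod_Icc_of_hasFDerivAt_of_le V W (fderiv ℝ V) (fderiv ℝ W)
    (0, 0) (1, 1) (by simp) hV.continuous.continuousOn hW.continuous.continuousOn
    (fun x _ => (hV.differentiable one_ne_zero x).hasFDerivAt)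
    (fun x _ => (hW.differentiable one_ne_zero x).hasFDerivAt)
    (hcont.continuousOn.integrableOn_compact isCompact_Icc)
  rw [unitSquare, Set.Icc_prod_Icc]
  exact hdiv.trans (by simp [hV_sides, hW_sides])

end Periodic

section Weitzenbock

variable {ε : ℝ} {u f : ℝ × ℝ → ℂ} {g A1 A2 : ℝ × ℝ → ℝ}

/-- The connection Laplacian `D₁D₁ + D₂D₂` on sections, with nonpositive spectrum. -/
def covLaplacian (A1 A2 : ℝ × ℝ → ℝ) (f : ℝ × ℝ → ℂ) (x : ℝ × ℝ) : ℂ :=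
  D1 A1 (D1 A1 f) x + D2 A2 (D2 A2 f) x

lemma contDiff_D1 {n : WithTop ℕ∞} (hf : ContDiff ℝ (n + 1) f) (hA1 : ContDiff ℝ n A1) :
    ContDiff ℝ n (D1 A1 f) :=
  contDiff_covDeriv hf hA1 (1, 0)

lemma contDiff_D2 {n : WithTop ℕ∞} (hf : ContDiff ℝ (n + 1) f) (hA2 : ContDiff ℝ n A2) :
    ContDiff ℝ n (D2 A2 f) :=
  contDiff_covDeriv hf hA2 (0, 1)

lemma contDiff_sigP {n : WithTop ℕ∞} (hf : ContDiff ℝ (n + 1) f) (hA1 : ContDiff ℝ n A1)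
    (hA2 : ContDiff ℝ n A2) : ContDiff ℝ n (sigP f A1 A2) :=
  (contDiff_D1 hf hA1).add (contDiff_const.mul (contDiff_D2 hf hA2))

lemma contDiff_curv {n : WithTop ℕ∞} (hA1 : ContDiff ℝ (n + 1) A1) (hA2 : ContDiff ℝ (n + 1) A2) :
    ContDiff ℝ n (curv A1 A2) :=
  (contDiff_fderiv_apply hA2 (1, 0)).sub (contDiff_fderiv_apply hA1 (0, 1))

lemma contDiff_hfun {n : WithTop ℕ∞} (hu : ContDiff ℝ n u) : ContDiff ℝ n (hfun ε u) :=
  (contDiff_const.sub (hu.norm_sq ℝ)).div_const _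

lemma Periodic2.sigP (hf : Periodic2 f) (hA1 : Periodic2 A1) (hA2 : Periodic2 A2) :
    Periodic2 (sigP f A1 A2) :=
  (hf.covDeriv hA1 (1, 0)).map₂ (hf.covDeriv hA2 (0, 1)) fun z w => z + I * w

lemma D1_D2_sub_D2_D1 (hf : ContDiff ℝ 2 f) (hA1 : ContDiff ℝ 1 A1) (hA2 : ContDiff ℝ 1 A2)
    (x : ℝ × ℝ) :
    D1 A1 (D2 A2 f) x - D2 A2 (D1 A1 f) x = -I * (curv A1 A2 x : ℂ) * f x :=
  covDeriv_comm hf.contDiffAt (hA1.differentiable one_ne_zero x)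
    (hA2.differentiable one_ne_zero x) (1, 0) (0, 1)

lemma covDeriv_D1_add_const_mul_D2 (hf : ContDiff ℝ 2 f) (hA1 : ContDiff ℝ 1 A1)
    (hA2 : ContDiff ℝ 1 A2) (c : ℂ) (e : ℝ × ℝ) (a : ℝ × ℝ → ℝ) (x : ℝ × ℝ) :
    covDeriv e a (fun y => D1 A1 f y + c * D2 A2 f y) x
      = covDeriv e a (D1 A1 f) x + c * covDeriv e a (D2 A2 f) x := by
  have hD1 : DifferentiableAt ℝ (D1 A1 f) x :=
    (contDiff_D1 (n := 1) hf hA1).differentiable one_ne_zero x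
  have hD2 : DifferentiableAt ℝ (D2 A2 f) x :=
    (contDiff_D2 (n := 1) hf hA2).differentiable one_ne_zero x
  rw [covDeriv_add hD1 (hD2.const_mul c), covDeriv_const_mul hD2]

lemma sigM_sigP (hf : ContDiff ℝ 2 f) (hA1 : ContDiff ℝ 1 A1) (hA2 : ContDiff ℝ 1 A2)
    (x : ℝ × ℝ) :
    sigM (sigP f A1 A2) A1 A2 x = covLaplacian A1 A2 f x + curv A1 A2 x * f x := by
  have h1 : D1 A1 (sigP f A1 A2) x = D1 A1 (D1 A1 f) x + I * D1 A1 (D2 A2 f) x :=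
    covDeriv_D1_add_const_mul_D2 hf hA1 hA2 I (1, 0) A1 x
  have h2 : D2 A2 (sigP f A1 A2) x = D2 A2 (D1 A1 f) x + I * D2 A2 (D2 A2 f) x :=
    covDeriv_D1_add_const_mul_D2 hf hA1 hA2 I (0, 1) A2 x
  rw [sigM, h1, h2, covLaplacian]
  linear_combination I * D1_D2_sub_D2_D1 hf hA1 hA2 x
    - (D2 A2 (D2 A2 f) x + curv A1 A2 x * f x) * I_sq

lemma sigP_sigM (hf : ContDiff ℝ 2 f) (hA1 : ContDiff ℝ 1 A1) (hA2 : ContDiff ℝ 1 A2)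
    (x : ℝ × ℝ) :
    sigP (sigM f A1 A2) A1 A2 x = covLaplacian A1 A2 f x - curv A1 A2 x * f x := by
  have hsigM : sigM f A1 A2 = fun y => D1 A1 f y + -I * D2 A2 f y := by
    funext y
    rw [sigM, neg_mul, sub_eq_add_neg]
  have h1 : D1 A1 (sigM f A1 A2) x = D1 A1 (D1 A1 f) x + -I * D1 A1 (D2 A2 f) x :=
    hsigM ▸ covDeriv_D1_add_const_mul_D2 hf hA1 hA2 (-I) (1, 0) A1 x
  have h2 : D2 A2 (sigM f A1 A2) x = D2 A2 (D1 A1 f) x + -I * D2 A2 (D2 A2 f) x :=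
    hsigM ▸ covDeriv_D1_add_const_mul_D2 hf hA1 hA2 (-I) (0, 1) A2 x
  rw [sigP, h1, h2, covLaplacian]
  linear_combination -I * D1_D2_sub_D2_D1 hf hA1 hA2 x
    - (D2 A2 (D2 A2 f) x - curv A1 A2 x * f x) * I_sq

lemma sigP_ofReal_mul {x : ℝ × ℝ} (hg : DifferentiableAt ℝ g x) (hf : DifferentiableAt ℝ f x) :
    sigP (fun y => (g y : ℂ) * f y) A1 A2 x
      = ((pd1 g x : ℝ) + I * (pd2 g x : ℝ)) * f x + g x * sigP f A1 A2 x := by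
  have h1 : D1 A1 (fun y => (g y : ℂ) * f y) x = pd1 g x * f x + g x * D1 A1 f x :=
    covDeriv_ofReal_mul hg hf (1, 0)
  have h2 : D2 A2 (fun y => (g y : ℂ) * f y) x = pd2 g x * f x + g x * D2 A2 f x :=
    covDeriv_ofReal_mul hg hf (0, 1)
  rw [sigP, h1, h2, sigP]
  ring

lemma fderiv_hfun_apply {x : ℝ × ℝ} (hu : DifferentiableAt ℝ u x) (a : ℝ × ℝ → ℝ) (e : ℝ × ℝ) :
    fderiv ℝ (hfun ε u) x e = -⟪u x, covDeriv e a u x⟫_ℝ / ε ^ 2 := by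
  have hh : hfun ε u = fun y => (2 * ε ^ 2)⁻¹ * (1 - ⟪u y, u y⟫_ℝ) := by
    funext y
    rw [hfun, real_inner_self_eq_norm_sq, div_eq_inv_mul]
  rw [hh, fderiv_const_mul ((hu.inner ℝ hu).const_sub 1), fderiv_const_sub, smul_apply, neg_apply,
    fderiv_inner_eq_covDeriv hu hu a, real_inner_comm (u x), smul_eq_mul]
  ring

end Weitzenbock

section Solutions

variable {ε : ℝ} {u : ℝ × ℝ → ℂ} {A1 A2 : ℝ × ℝ → ℝ}

lemma IsYMH.covLaplacian_eq (h : IsYMH ε u A1 A2) (x : ℝ × ℝ) :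
    covLaplacian A1 A2 u x = -(hfun ε u x * u x) := by
  rw [← h.1 x, neg_neg, covLaplacian]

lemma IsYMH.sigM_sigP (h : IsYMH ε u A1 A2) (hu : ContDiff ℝ 2 u) (hA1 : ContDiff ℝ 1 A1)
    (hA2 : ContDiff ℝ 1 A2) (x : ℝ × ℝ) :
    sigM (sigP u A1 A2) A1 A2 x = ((curv A1 A2 - hfun ε u) x : ℂ) * u x := by
  rw [_root_.sigM_sigP hu hA1 hA2, h.covLaplacian_eq, Pi.sub_apply]
  push_cast
  ring

lemma IsYMH.gradient_curv_sub_hfun (h : IsYMH ε u A1 A2) (hε : ε ≠ 0) (hu : ContDiff ℝ 1 u)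
    (hA1 : ContDiff ℝ 2 A1) (hA2 : ContDiff ℝ 2 A2) (x : ℝ × ℝ) :
    (pd1 (curv A1 A2 - hfun ε u) x : ℝ) + I * (pd2 (curv A1 A2 - hfun ε u) x : ℝ)
      = conj (u x) * sigP u A1 A2 x / (ε : ℂ) ^ 2 := by
  have hF : DifferentiableAt ℝ (curv A1 A2) x :=
    (contDiff_curv (n := 1) hA1 hA2).differentiable one_ne_zero x
  have hh : DifferentiableAt ℝ (hfun ε u) x := (contDiff_hfun hu).differentiable one_ne_zero x
  have hu' : DifferentiableAt ℝ u x := hu.differentiable one_ne_zero x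
  have h1 : pd1 (curv A1 A2 - hfun ε u) x
      = (-(conj (u x) * D2 A2 u x).im + ⟪u x, D1 A1 u x⟫_ℝ) / ε ^ 2 := by
    rw [← h.2.2 x, pd1, fderiv_sub hF hh, sub_apply, fderiv_hfun_apply hu' A1]
    simp only [D1, pd1, covDeriv]
    field_simp
    ring
  have h2 : pd2 (curv A1 A2 - hfun ε u) x
      = ((conj (u x) * D1 A1 u x).im + ⟪u x, D2 A2 u x⟫_ℝ) / ε ^ 2 := by
    rw [← h.2.1 x, pd2, fderiv_sub hF hh, sub_apply, fderiv_hfun_apply hu' A2]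
    simp only [D2, pd2, covDeriv]
    field_simp
    ring
  rw [h1, h2, sigP]
  apply Complex.ext <;> simp [Complex.inner, ← ofReal_pow] <;> ring

lemma IsYMH.covLaplacian_sigP (h : IsYMH ε u A1 A2) (hε : ε ≠ 0) (hu : ContDiff ℝ 3 u)
    (hA1 : ContDiff ℝ 2 A1) (hA2 : ContDiff ℝ 2 A2) (x : ℝ × ℝ) :
    covLaplacian A1 A2 (sigP u A1 A2) x
      = ((2 * curv A1 A2 x - hfun ε u x + ‖u x‖ ^ 2 / ε ^ 2 : ℝ) : ℂ) * sigP u A1 A2 x := by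
  have hA1' : ContDiff ℝ 1 A1 := hA1.of_le one_le_two
  have hA2' : ContDiff ℝ 1 A2 := hA2.of_le one_le_two
  have hu2 : ContDiff ℝ 2 u := hu.of_le (by norm_num)
  have hu1 : ContDiff ℝ 1 u := hu2.of_le one_le_two
  have hσ : ContDiff ℝ 2 (sigP u A1 A2) := contDiff_sigP (n := 2) hu hA1 hA2
  have hdefect : DifferentiableAt ℝ (curv A1 A2 - hfun ε u) x :=
    ((contDiff_curv (n := 1) hA1 hA2).sub (contDiff_hfun hu1)).differentiable one_ne_zero x
  have hsigM : sigM (sigP u A1 A2) A1 A2 = fun y => ((curv A1 A2 - hfun ε u) y : ℂ) * u y :=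
    funext (h.sigM_sigP hu2 hA1' hA2')
  have hbochner := sigP_sigM hσ hA1' hA2' x
  rw [hsigM, sigP_ofReal_mul hdefect (hu1.differentiable one_ne_zero x),
    h.gradient_curv_sub_hfun hε hu1 hA1 hA2, Pi.sub_apply] at hbochner
  have hnorm : ((‖u x‖ ^ 2 : ℝ) : ℂ) = conj (u x) * u x := by
    rw [← normSq_eq_norm_sq, normSq_eq_conj_mul_self]
  push_cast at hbochner hnorm ⊢
  rw [hnorm]
  linear_combination -hbochner

end Solutions

section Green

variable {f : ℝ × ℝ → ℂ} {A1 A2 : ℝ × ℝ → ℝ}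

lemma pd1_inner_D1_add_pd2_inner_D2 (hf : ContDiff ℝ 2 f) (hA1 : ContDiff ℝ 1 A1)
    (hA2 : ContDiff ℝ 1 A2) (x : ℝ × ℝ) :
    pd1 (fun y => ⟪f y, D1 A1 f y⟫_ℝ) x + pd2 (fun y => ⟪f y, D2 A2 f y⟫_ℝ) x
      = ‖D1 A1 f x‖ ^ 2 + ‖D2 A2 f x‖ ^ 2 + ⟪f x, covLaplacian A1 A2 f x⟫_ℝ := by
  have hf' : DifferentiableAt ℝ f x := hf.differentiable two_ne_zero x
  have h1 : pd1 (fun y => ⟪f y, D1 A1 f y⟫_ℝ) x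
      = ⟪f x, D1 A1 (D1 A1 f) x⟫_ℝ + ⟪D1 A1 f x, D1 A1 f x⟫_ℝ :=
    fderiv_inner_eq_covDeriv hf' ((contDiff_D1 (n := 1) hf hA1).differentiable one_ne_zero x) A1 _
  have h2 : pd2 (fun y => ⟪f y, D2 A2 f y⟫_ℝ) x
      = ⟪f x, D2 A2 (D2 A2 f) x⟫_ℝ + ⟪D2 A2 f x, D2 A2 f x⟫_ℝ :=
    fderiv_inner_eq_covDeriv hf' ((contDiff_D2 (n := 1) hf hA2).differentiable one_ne_zero x) A2 _
  rw [h1, h2, covLaplacian, inner_add_right, real_inner_self_eq_norm_sq,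
    real_inner_self_eq_norm_sq]
  ring

lemma integral_norm_sq_add_inner_covLaplacian_eq_zero (hf : ContDiff ℝ 2 f)
    (hA1 : ContDiff ℝ 1 A1) (hA2 : ContDiff ℝ 1 A2) (hfp : Periodic2 f) (hA1p : Periodic2 A1)
    (hA2p : Periodic2 A2) :
    ∫ x in unitSquare,
      (‖D1 A1 f x‖ ^ 2 + ‖D2 A2 f x‖ ^ 2 + ⟪f x, covLaplacian A1 A2 f x⟫_ℝ) = 0 := by
  simp only [← pd1_inner_D1_add_pd2_inner_D2 hf hA1 hA2]
  have hf' : ContDiff ℝ 1 f := hf.of_le one_le_two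
  exact integral_divergence_eq_zero_of_periodic
    (hf'.inner ℝ (contDiff_D1 (n := 1) hf hA1)) (hf'.inner ℝ (contDiff_D2 (n := 1) hf hA2))
    (hfp.map₂ (hfp.covDeriv hA1p (1, 0)) (⟪·, ·⟫_ℝ))
    (hfp.map₂ (hfp.covDeriv hA2p (0, 1)) (⟪·, ·⟫_ℝ))

lemma continuous_covLaplacian (hf : ContDiff ℝ 2 f) (hA1 : ContDiff ℝ 1 A1)
    (hA2 : ContDiff ℝ 1 A2) : Continuous (covLaplacian A1 A2 f) :=
  ((contDiff_D1 (n := 0) (contDiff_D1 (n := 1) hf hA1) (hA1.of_le zero_le_one)).add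
    (contDiff_D2 (n := 0) (contDiff_D2 (n := 1) hf hA2) (hA2.of_le zero_le_one))).continuous

end Green

section SecondVariation

variable {ε : ℝ} {u v : ℝ × ℝ → ℂ} {A1 A2 a1 a2 : ℝ × ℝ → ℝ}

/-- The field `(εF, D₁u, D₂u, (1 − |u|²)/(2ε))`, whose squared norm is the energy density. The two
real entries are embedded in `ℂ`. -/
def energyField (ε : ℝ) (u : ℝ × ℝ → ℂ) (A1 A2 : ℝ × ℝ → ℝ) (x : ℝ × ℝ) :
    EuclideanSpace ℂ (Fin 4) :=
  !₂[((ε * curv A1 A2 x : ℝ) : ℂ), D1 A1 u x, D2 A2 u x,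
    (((1 - ‖u x‖ ^ 2) / (2 * ε) : ℝ) : ℂ)]

/-- The coefficient of `t` in the expansion of `energyField` along the path
`(u + t v, A + t a)`. -/
def energyFieldLinear (ε : ℝ) (u : ℝ × ℝ → ℂ) (A1 A2 : ℝ × ℝ → ℝ) (v : ℝ × ℝ → ℂ)
    (a1 a2 : ℝ × ℝ → ℝ) (x : ℝ × ℝ) : EuclideanSpace ℂ (Fin 4) :=
  !₂[((ε * curv a1 a2 x : ℝ) : ℂ), D1 A1 v x - I * a1 x * u x, D2 A2 v x - I * a2 x * u x,
    ((-(⟪u x, v x⟫_ℝ / ε) : ℝ) : ℂ)]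

/-- The coefficient of `t²` in the expansion of `energyField` along the path
`(u + t v, A + t a)`. -/
def energyFieldQuadratic (ε : ℝ) (v : ℝ × ℝ → ℂ) (a1 a2 : ℝ × ℝ → ℝ) (x : ℝ × ℝ) :
    EuclideanSpace ℂ (Fin 4) :=
  !₂[0, -(I * a1 x * v x), -(I * a2 x * v x), ((-(‖v x‖ ^ 2 / (2 * ε)) : ℝ) : ℂ)]

/-- The second derivative at `t = 0` of the energy density along the path `(u + t v, A + t a)`,
written as twice the coefficient of `t²` in the squared norm of `energyField`. -/
def secondVariationDensity (ε : ℝ) (u : ℝ × ℝ → ℂ) (A1 A2 : ℝ × ℝ → ℝ) (v : ℝ × ℝ → ℂ)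
    (a1 a2 : ℝ × ℝ → ℝ) (x : ℝ × ℝ) : ℝ :=
  2 * (‖energyFieldLinear ε u A1 A2 v a1 a2 x‖ ^ 2
    + 2 * ⟪energyField ε u A1 A2 x, energyFieldQuadratic ε v a1 a2 x⟫_ℝ)

lemma norm_sq_energyField (x : ℝ × ℝ) :
    ‖energyField ε u A1 A2 x‖ ^ 2
      = ε ^ 2 * curv A1 A2 x ^ 2 + ‖D1 A1 u x‖ ^ 2 + ‖D2 A2 u x‖ ^ 2
        + (1 - ‖u x‖ ^ 2) ^ 2 / (4 * ε ^ 2) := by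
  simp only [energyField, EuclideanSpace.norm_sq_eq, Fin.sum_univ_four, norm_real,
    Real.norm_eq_abs, sq_abs, Matrix.cons_val]
  ring

lemma secondVariationDensity_eq (x : ℝ × ℝ) :
    secondVariationDensity ε u A1 A2 v a1 a2 x
      = 2 * (ε ^ 2 * curv a1 a2 x ^ 2
          + (‖D1 A1 v x - I * a1 x * u x‖ ^ 2 - 2 * ⟪D1 A1 u x, I * a1 x * v x⟫_ℝ)
          + (‖D2 A2 v x - I * a2 x * u x‖ ^ 2 - 2 * ⟪D2 A2 u x, I * a2 x * v x⟫_ℝ)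
          + (⟪u x, v x⟫_ℝ ^ 2 / ε ^ 2 - hfun ε u x * ‖v x‖ ^ 2)) := by
  simp only [secondVariationDensity, energyFieldLinear, energyField, energyFieldQuadratic,
    EuclideanSpace.norm_sq_eq, PiLp.inner_apply, Fin.sum_univ_four, norm_real, Real.norm_eq_abs,
    sq_abs, Matrix.cons_val, hfun, Complex.inner, conj_ofReal, re_ofReal_mul, ofReal_re, neg_mul,
    neg_re, zero_mul, zero_re]
  ring

lemma curv_add_smul {x : ℝ × ℝ} (hA1 : DifferentiableAt ℝ A1 x) (hA2 : DifferentiableAt ℝ A2 x)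
    (ha1 : DifferentiableAt ℝ a1 x) (ha2 : DifferentiableAt ℝ a2 x) (t : ℝ) :
    curv (fun y => A1 y + t * a1 y) (fun y => A2 y + t * a2 y) x
      = curv A1 A2 x + t * curv a1 a2 x := by
  simp only [curv, pd1, pd2, fderiv_fun_add hA1 (ha1.const_mul t),
    fderiv_fun_add hA2 (ha2.const_mul t), fderiv_const_mul ha1, fderiv_const_mul ha2, add_apply,
    smul_apply, smul_eq_mul]
  ring

lemma energyField_add_smul {x : ℝ × ℝ} (hu : DifferentiableAt ℝ u x) (hv : DifferentiableAt ℝ v x)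
    (hA1 : DifferentiableAt ℝ A1 x) (hA2 : DifferentiableAt ℝ A2 x)
    (ha1 : DifferentiableAt ℝ a1 x) (ha2 : DifferentiableAt ℝ a2 x) (t : ℝ) :
    energyField ε (fun y => u y + t • v y) (fun y => A1 y + t * a1 y) (fun y => A2 y + t * a2 y) x
      = energyField ε u A1 A2 x + t • energyFieldLinear ε u A1 A2 v a1 a2 x
        + t ^ 2 • energyFieldQuadratic ε v a1 a2 x := by
  have hD1 : D1 (fun y => A1 y + t * a1 y) (fun y => u y + t • v y) x
      = D1 A1 u x + t • (D1 A1 v x - I * a1 x * u x) + t ^ 2 • -(I * a1 x * v x) :=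
    covDeriv_add_smul hu hv t (1, 0)
  have hD2 : D2 (fun y => A2 y + t * a2 y) (fun y => u y + t • v y) x
      = D2 A2 u x + t • (D2 A2 v x - I * a2 x * u x) + t ^ 2 • -(I * a2 x * v x) :=
    covDeriv_add_smul hu hv t (0, 1)
  have hnorm : ‖u x + t • v x‖ ^ 2 = ‖u x‖ ^ 2 + 2 * t * ⟪u x, v x⟫_ℝ + t ^ 2 * ‖v x‖ ^ 2 := by
    rw [norm_add_sq_real, norm_smul, real_inner_smul_right, mul_pow, Real.norm_eq_abs, sq_abs]
    ring
  simp only [energyField, energyFieldLinear, energyFieldQuadratic,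
    curv_add_smul hA1 hA2 ha1 ha2, hD1, hD2, hnorm]
  ext i
  fin_cases i <;> simp <;> ring

lemma continuous_curv (hA1 : ContDiff ℝ 1 A1) (hA2 : ContDiff ℝ 1 A2) :
    Continuous (curv A1 A2) :=
  (contDiff_curv (n := 0) hA1 hA2).continuous

lemma continuous_D1 (hu : ContDiff ℝ 1 u) (hA1 : Continuous A1) : Continuous (D1 A1 u) :=
  (contDiff_D1 (n := 0) hu (contDiff_zero.2 hA1)).continuous

lemma continuous_D2 (hu : ContDiff ℝ 1 u) (hA2 : Continuous A2) : Continuous (D2 A2 u) :=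
  (contDiff_D2 (n := 0) hu (contDiff_zero.2 hA2)).continuous

lemma continuous_energyField (hu : ContDiff ℝ 1 u) (hA1 : ContDiff ℝ 1 A1)
    (hA2 : ContDiff ℝ 1 A2) : Continuous (energyField ε u A1 A2) := by
  have hF := continuous_curv hA1 hA2
  have hD1 := continuous_D1 hu hA1.continuous
  have hD2 := continuous_D2 hu hA2.continuous
  have hu' := hu.continuous
  unfold energyField
  fun_prop

lemma continuous_energyFieldLinear (hu : Continuous u) (hA1 : Continuous A1) (hA2 : Continuous A2)
    (hv : ContDiff ℝ 1 v) (ha1 : ContDiff ℝ 1 a1) (ha2 : ContDiff ℝ 1 a2) :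
    Continuous (energyFieldLinear ε u A1 A2 v a1 a2) := by
  have hF := continuous_curv ha1 ha2
  have hD1 := continuous_D1 hv hA1
  have hD2 := continuous_D2 hv hA2
  have hv' := hv.continuous
  have ha1' := ha1.continuous
  have ha2' := ha2.continuous
  unfold energyFieldLinear
  fun_prop

lemma continuous_energyFieldQuadratic (hv : Continuous v) (ha1 : Continuous a1)
    (ha2 : Continuous a2) : Continuous (energyFieldQuadratic ε v a1 a2) := by
  unfold energyFieldQuadratic
  fun_prop

lemma continuous_secondVariationDensity (hu : ContDiff ℝ 1 u) (hA1 : ContDiff ℝ 1 A1)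
    (hA2 : ContDiff ℝ 1 A2) (hv : ContDiff ℝ 1 v) (ha1 : ContDiff ℝ 1 a1)
    (ha2 : ContDiff ℝ 1 a2) : Continuous (secondVariationDensity ε u A1 A2 v a1 a2) :=
  continuous_const.mul (((continuous_energyFieldLinear hu.continuous hA1.continuous hA2.continuous
    hv ha1 ha2).norm.pow 2).add (continuous_const.mul ((continuous_energyField hu hA1 hA2).inner
      (continuous_energyFieldQuadratic hv.continuous ha1.continuous ha2.continuous))))

lemma iteratedDeriv_two_energy (hu : ContDiff ℝ 1 u) (hA1 : ContDiff ℝ 1 A1)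
    (hA2 : ContDiff ℝ 1 A2) (hv : ContDiff ℝ 1 v) (ha1 : ContDiff ℝ 1 a1)
    (ha2 : ContDiff ℝ 1 a2) :
    iteratedDeriv 2 (fun t : ℝ =>
        energy ε (fun x => u x + t • v x) (fun x => A1 x + t * a1 x) (fun x => A2 x + t * a2 x)) 0
      = ∫ x in unitSquare, secondVariationDensity ε u A1 A2 v a1 a2 x := by
  have differentiableAt {F : Type} [NormedAddCommGroup F] [NormedSpace ℝ F] {φ : ℝ × ℝ → F}
      (hφ : ContDiff ℝ 1 φ) (x : ℝ × ℝ) : DifferentiableAt ℝ φ x :=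
    hφ.differentiable one_ne_zero x
  have henergy (t : ℝ) :
      energy ε (fun x => u x + t • v x) (fun x => A1 x + t * a1 x) (fun x => A2 x + t * a2 x)
        = ∫ x in unitSquare, ‖energyField ε u A1 A2 x + t • energyFieldLinear ε u A1 A2 v a1 a2 x
            + t ^ 2 • energyFieldQuadratic ε v a1 a2 x‖ ^ 2 := by
    simp only [energy, ← norm_sq_energyField,
      energyField_add_smul (differentiableAt hu _) (differentiableAt hv _)
        (differentiableAt hA1 _) (differentiableAt hA2 _) (differentiableAt ha1 _)
        (differentiableAt ha2 _)]
  simp only [henergy, secondVariationDensity, integral_const_mul]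
  exact iteratedDeriv_two_integral_norm_sq isCompact_unitSquare
    (continuous_energyField hu hA1 hA2).continuousOn
    (continuous_energyFieldLinear hu.continuous hA1.continuous hA2.continuous hv ha1
      ha2).continuousOn
    (continuous_energyFieldQuadratic hv.continuous ha1.continuous ha2.continuous).continuousOn

end SecondVariation

section Trace

variable {ε : ℝ} {u : ℝ × ℝ → ℂ} {A1 A2 : ℝ × ℝ → ℝ}

lemma IsYMH.norm_sq_gradient_curv_sub_hfun (h : IsYMH ε u A1 A2) (hε : ε ≠ 0)
    (hu : ContDiff ℝ 1 u) (hA1 : ContDiff ℝ 2 A1) (hA2 : ContDiff ℝ 2 A2) (x : ℝ × ℝ) :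
    ε ^ 2 * (pd1 (curv A1 A2 - hfun ε u) x ^ 2 + pd2 (curv A1 A2 - hfun ε u) x ^ 2)
      = ‖u x‖ ^ 2 * ‖sigP u A1 A2 x‖ ^ 2 / ε ^ 2 := by
  have hnorm := congrArg normSq (h.gradient_curv_sub_hfun hε hu hA1 hA2 x)
  rw [mul_comm I, normSq_add_mul_I, ← ofReal_pow, normSq_div, normSq_mul, normSq_conj,
    normSq_ofReal, normSq_eq_norm_sq, normSq_eq_norm_sq] at hnorm
  rw [hnorm]
  field_simp

lemma IsYMH.D1_sigP_eq (h : IsYMH ε u A1 A2) (hu : ContDiff ℝ 2 u) (hA1 : ContDiff ℝ 1 A1)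
    (hA2 : ContDiff ℝ 1 A2) (x : ℝ × ℝ) :
    D1 A1 (sigP u A1 A2) x
      = I * D2 A2 (sigP u A1 A2) x + ((curv A1 A2 - hfun ε u) x : ℂ) * u x :=
  sub_eq_iff_eq_add'.1 (h.sigM_sigP hu hA1 hA2 x)

lemma IsYMH.secondVariationDensity_fst (h : IsYMH ε u A1 A2) (hu : ContDiff ℝ 2 u)
    (hA1 : ContDiff ℝ 1 A1) (hA2 : ContDiff ℝ 1 A2) (x : ℝ × ℝ) :
    secondVariationDensity ε u A1 A2 (sigP u A1 A2) 0 (curv A1 A2 - hfun ε u) x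
      = 2 * (ε ^ 2 * pd1 (curv A1 A2 - hfun ε u) x ^ 2 + 2 * ‖D1 A1 (sigP u A1 A2) x‖ ^ 2
          + ⟪u x, sigP u A1 A2 x⟫_ℝ ^ 2 / ε ^ 2
          + 2 * (curv A1 A2 - hfun ε u) x * ⟪I * D2 A2 u x, sigP u A1 A2 x⟫_ℝ
          - hfun ε u x * ‖sigP u A1 A2 x‖ ^ 2) := by
  have hcurv : curv 0 (curv A1 A2 - hfun ε u) x = pd1 (curv A1 A2 - hfun ε u) x := by
    simp [curv, pd2]
  have hD2 : D2 A2 (sigP u A1 A2) x - I * ((curv A1 A2 - hfun ε u) x : ℂ) * u x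
      = -I * D1 A1 (sigP u A1 A2) x := by
    linear_combination I * h.D1_sigP_eq hu hA1 hA2 x + D2 A2 (sigP u A1 A2) x * I_sq
  have hinner : ⟪D2 A2 u x, I * ((curv A1 A2 - hfun ε u) x : ℂ) * sigP u A1 A2 x⟫_ℝ
      = -((curv A1 A2 - hfun ε u) x * ⟪I * D2 A2 u x, sigP u A1 A2 x⟫_ℝ) := by
    rw [mul_assoc, inner_I_mul_right, ← real_smul, real_inner_smul_right]
  rw [secondVariationDensity_eq, hcurv, hD2, hinner]
  simp only [Pi.zero_apply, ofReal_zero, mul_zero, zero_mul, sub_zero, inner_zero_right, norm_mul,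
    norm_neg, norm_I, one_mul]
  ring

lemma IsYMH.secondVariationDensity_snd (h : IsYMH ε u A1 A2) (hu : ContDiff ℝ 2 u)
    (hA1 : ContDiff ℝ 1 A1) (hA2 : ContDiff ℝ 1 A2) (x : ℝ × ℝ) :
    secondVariationDensity ε u A1 A2 (fun y => -I * sigP u A1 A2 y) (hfun ε u - curv A1 A2) 0 x
      = 2 * (ε ^ 2 * pd2 (curv A1 A2 - hfun ε u) x ^ 2 + 2 * ‖D2 A2 (sigP u A1 A2) x‖ ^ 2
          + ⟪u x, I * sigP u A1 A2 x⟫_ℝ ^ 2 / ε ^ 2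
          + 2 * (curv A1 A2 - hfun ε u) x * ⟪D1 A1 u x, sigP u A1 A2 x⟫_ℝ
          - hfun ε u x * ‖sigP u A1 A2 x‖ ^ 2) := by
  have hσ : DifferentiableAt ℝ (sigP u A1 A2) x :=
    (contDiff_sigP (n := 1) hu hA1 hA2).differentiable one_ne_zero x
  have hcurv : curv (hfun ε u - curv A1 A2) 0 x = pd2 (curv A1 A2 - hfun ε u) x := by
    rw [← neg_sub (curv A1 A2), curv, pd2, fderiv_neg]
    simp [pd1, pd2]
  have hD1 : D1 A1 (fun y => -I * sigP u A1 A2 y) x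
        - I * ((hfun ε u - curv A1 A2) x : ℂ) * u x = D2 A2 (sigP u A1 A2) x := by
    have hmul : D1 A1 (fun y => -I * sigP u A1 A2 y) x = -I * D1 A1 (sigP u A1 A2) x :=
      covDeriv_const_mul hσ (-I) (1, 0)
    rw [hmul, h.D1_sigP_eq hu hA1 hA2, ← neg_sub (curv A1 A2), Pi.neg_apply, ofReal_neg]
    linear_combination -D2 A2 (sigP u A1 A2) x * I_sq
  have hD2 : D2 A2 (fun y => -I * sigP u A1 A2 y) x = -I * D2 A2 (sigP u A1 A2) x :=
    covDeriv_const_mul hσ (-I) (0, 1)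
  have hmul : I * ((hfun ε u - curv A1 A2) x : ℂ) * (-I * sigP u A1 A2 x)
      = -((curv A1 A2 - hfun ε u) x • sigP u A1 A2 x) := by
    rw [← neg_sub (curv A1 A2), Pi.neg_apply, ofReal_neg, real_smul]
    linear_combination ((curv A1 A2 - hfun ε u) x : ℂ) * sigP u A1 A2 x * I_sq
  rw [secondVariationDensity_eq, hcurv, hD1, hD2, hmul, inner_neg_right, real_inner_smul_right]
  simp only [Pi.zero_apply, ofReal_zero, mul_zero, zero_mul, sub_zero, inner_zero_right, norm_mul,
    norm_neg, norm_I, one_mul, neg_mul, inner_neg_right, neg_sq]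
  ring

lemma IsYMH.trace_secondVariationDensity (h : IsYMH ε u A1 A2) (hε : ε ≠ 0)
    (hu : ContDiff ℝ 3 u) (hA1 : ContDiff ℝ 2 A1) (hA2 : ContDiff ℝ 2 A2) (x : ℝ × ℝ) :
    secondVariationDensity ε u A1 A2 (sigP u A1 A2) 0 (curv A1 A2 - hfun ε u) x
      + secondVariationDensity ε u A1 A2 (fun y => -I * sigP u A1 A2 y) (hfun ε u - curv A1 A2) 0 x
      = 4 * (‖D1 A1 (sigP u A1 A2) x‖ ^ 2 + ‖D2 A2 (sigP u A1 A2) x‖ ^ 2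
          + ⟪sigP u A1 A2 x, covLaplacian A1 A2 (sigP u A1 A2) x⟫_ℝ)
        - 4 * ((curv A1 A2 x + hfun ε u x) * ‖sigP u A1 A2 x‖ ^ 2) := by
  have hA1' : ContDiff ℝ 1 A1 := hA1.of_le one_le_two
  have hA2' : ContDiff ℝ 1 A2 := hA2.of_le one_le_two
  have hu2 : ContDiff ℝ 2 u := hu.of_le (by norm_num)
  have hgradient := h.norm_sq_gradient_curv_sub_hfun hε (hu2.of_le one_le_two) hA1 hA2 x
  have hpotential := inner_sq_add_inner_I_mul_sq (u x) (sigP u A1 A2 x)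
  have hcross : ⟪D1 A1 u x, sigP u A1 A2 x⟫_ℝ + ⟪I * D2 A2 u x, sigP u A1 A2 x⟫_ℝ
      = ‖sigP u A1 A2 x‖ ^ 2 := by
    rw [← inner_add_left, ← real_inner_self_eq_norm_sq, sigP]
  have hlaplacian : ⟪sigP u A1 A2 x, covLaplacian A1 A2 (sigP u A1 A2) x⟫_ℝ
      = (2 * curv A1 A2 x - hfun ε u x + ‖u x‖ ^ 2 / ε ^ 2) * ‖sigP u A1 A2 x‖ ^ 2 := by
    rw [h.covLaplacian_sigP hε hu hA1 hA2, ← real_smul, real_inner_smul_right,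
      real_inner_self_eq_norm_sq]
  rw [h.secondVariationDensity_fst hu2 hA1' hA2', h.secondVariationDensity_snd hu2 hA1' hA2',
    hlaplacian, Pi.sub_apply]
  linear_combination 2 * hgradient + 2 * hpotential / ε ^ 2
    + 4 * (curv A1 A2 x - hfun ε u x) * hcross

lemma IsYMH.integral_trace_secondVariationDensity (h : IsYMH ε u A1 A2) (hε : ε ≠ 0)
    (hu : ContDiff ℝ 3 u) (hup : Periodic2 u) (hA1 : ContDiff ℝ 2 A1) (hA1p : Periodic2 A1)
    (hA2 : ContDiff ℝ 2 A2) (hA2p : Periodic2 A2) :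
    ∫ x in unitSquare,
      (secondVariationDensity ε u A1 A2 (sigP u A1 A2) 0 (curv A1 A2 - hfun ε u) x
        + secondVariationDensity ε u A1 A2 (fun y => -I * sigP u A1 A2 y)
            (hfun ε u - curv A1 A2) 0 x)
      = -4 * ∫ x in unitSquare, (curv A1 A2 x + hfun ε u x) * ‖sigP u A1 A2 x‖ ^ 2 := by
  have hA1' : ContDiff ℝ 1 A1 := hA1.of_le one_le_two
  have hA2' : ContDiff ℝ 1 A2 := hA2.of_le one_le_two
  have hσ : ContDiff ℝ 2 (sigP u A1 A2) := contDiff_sigP (n := 2) hu hA1 hA2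
  have hσ1 : ContDiff ℝ 1 (sigP u A1 A2) := hσ.of_le one_le_two
  have hgreen := integral_norm_sq_add_inner_covLaplacian_eq_zero hσ hA1' hA2'
    (hup.sigP hA1p hA2p) hA1p hA2p
  have hcont_green : Continuous fun x =>
      ‖D1 A1 (sigP u A1 A2) x‖ ^ 2 + ‖D2 A2 (sigP u A1 A2) x‖ ^ 2
        + ⟪sigP u A1 A2 x, covLaplacian A1 A2 (sigP u A1 A2) x⟫_ℝ :=
    (((continuous_D1 hσ1 hA1.continuous).norm.pow 2).add
      ((continuous_D2 hσ1 hA2.continuous).norm.pow 2)).add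
        (hσ.continuous.inner (continuous_covLaplacian hσ hA1' hA2'))
  have hcont : Continuous fun x => (curv A1 A2 x + hfun ε u x) * ‖sigP u A1 A2 x‖ ^ 2 :=
    ((continuous_curv hA1' hA2').add (contDiff_hfun hu).continuous).mul
      (hσ.continuous.norm.pow 2)
  simp only [h.trace_secondVariationDensity hε hu hA1 hA2]
  rw [integral_sub ((integrableOn_unitSquare hcont_green).const_mul 4)
    ((integrableOn_unitSquare hcont).const_mul 4), integral_const_mul, integral_const_mul, hgreen]
  ring

theorem trace_second_variation_general (hε : ε ≠ 0) (hu : ContDiff ℝ 3 u) (hup : Periodic2 u)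
    (hA1 : ContDiff ℝ 2 A1) (hA1p : Periodic2 A1) (hA2 : ContDiff ℝ 2 A2) (hA2p : Periodic2 A2)
    (hYMH : IsYMH ε u A1 A2) :
    iteratedDeriv 2 (fun t : ℝ =>
        energy ε (fun x => u x + t • sigP u A1 A2 x)
          (fun x => A1 x + t * 0)
          (fun x => A2 x + t * (curv A1 A2 x - hfun ε u x))) 0
      + iteratedDeriv 2 (fun t : ℝ =>
          energy ε (fun x => u x + t • (-I * sigP u A1 A2 x))
            (fun x => A1 x + t * (hfun ε u x - curv A1 A2 x))
            (fun x => A2 x + t * 0)) 0 =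
      -4 * ∫ x in unitSquare, (curv A1 A2 x + hfun ε u x) * ‖sigP u A1 A2 x‖ ^ 2 := by
  have hu1 : ContDiff ℝ 1 u := hu.of_le (by norm_num)
  have hA1' : ContDiff ℝ 1 A1 := hA1.of_le one_le_two
  have hA2' : ContDiff ℝ 1 A2 := hA2.of_le one_le_two
  have hσ : ContDiff ℝ 1 (sigP u A1 A2) :=
    contDiff_sigP (n := 1) (hu.of_le (by norm_num)) hA1' hA2'
  have hIσ : ContDiff ℝ 1 fun x => -I * sigP u A1 A2 x := contDiff_const.mul hσ
  have hF : ContDiff ℝ 1 (curv A1 A2) := contDiff_curv (n := 1) hA1 hA2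
  have hφ : ContDiff ℝ 1 (curv A1 A2 - hfun ε u) := hF.sub (contDiff_hfun hu1)
  have hφ' : ContDiff ℝ 1 (hfun ε u - curv A1 A2) := (contDiff_hfun hu1).sub hF
  have h0 : ContDiff ℝ 1 (0 : ℝ × ℝ → ℝ) := contDiff_const
  have hsum := hYMH.integral_trace_secondVariationDensity hε hu hup hA1 hA1p hA2 hA2p
  rw [integral_add
    (integrableOn_unitSquare (continuous_secondVariationDensity hu1 hA1' hA2' hσ h0 hφ))
    (integrableOn_unitSquare (continuous_secondVariationDensity hu1 hA1' hA2' hIσ hφ' h0))] at hsum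
  linear_combination iteratedDeriv_two_energy (ε := ε) hu1 hA1' hA2' hσ h0 hφ
    + iteratedDeriv_two_energy (ε := ε) hu1 hA1' hA2' hIσ hφ' h0 + hsum

end Trace

end

/-- Trace of the second variation over the constant Killing fields of the flat torus
(Corollary 4.3, flat torus case). -/
theorem trace_second_variation
    (ε : ℝ) (hε : 0 < ε) (u : ℝ × ℝ → ℂ) (A1 A2 : ℝ × ℝ → ℝ)
    (hu : ContDiff ℝ (⊤ : ℕ∞) u) (hup : Periodic2 u)
    (hA1 : ContDiff ℝ (⊤ : ℕ∞) A1) (hA1p : Periodic2 A1)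
    (hA2 : ContDiff ℝ (⊤ : ℕ∞) A2) (hA2p : Periodic2 A2)
    (hYMH : IsYMH ε u A1 A2) :
    iteratedDeriv 2 (fun t : ℝ =>
        energy ε (fun x => u x + t • sigP u A1 A2 x)
          (fun x => A1 x + t * 0)
          (fun x => A2 x + t * (curv A1 A2 x - hfun ε u x))) 0
      + iteratedDeriv 2 (fun t : ℝ =>
          energy ε (fun x => u x + t • (-(Complex.I) * sigP u A1 A2 x))
            (fun x => A1 x + t * (hfun ε u x - curv A1 A2 x))
            (fun x => A2 x + t * 0)) 0 =
      -4 * ∫ x in Set.Icc (0:ℝ) 1 ×ˢ Set.Icc (0:ℝ) 1,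
        (curv A1 A2 x + hfun ε u x) * ‖sigP u A1 A2 x‖ ^ 2 :=
  trace_second_variation_general hε.ne' (mod_cast contDiff_infty.1 hu 3) hup
    (mod_cast contDiff_infty.1 hA1 2) hA1p (mod_cast contDiff_infty.1 hA2 2) hA2p hYMH
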